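/- Let p: ℝ → ℝ be smooth, 2π-periodic and strictly positive, with p''(α) + p(α) > 0 for all α. For a > 0 and σ ∈ ℝ define α(ψ) := ∫₀^ψ dt/(a²cos²t + a⁻²sin²t) and p_{a,σ}(ψ) := p(α(ψ) + σ) · (a⁻²sin²ψ + a²cos²ψ)^{1/2}. Then there exists a pair (a,σ) with a > 0 and σ ∈ [0, π/2] such that ∫₀^{2π} p_{a,σ}(ψ) cos(2ψ) dψ = 0 and ∫₀^{2π} p_{a,σ}(ψ) sin(2ψ) dψ = 0. -/

import Mathlib

open Real Set intervalIntegral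

/-- The reparametrization angle α(ψ) induced by the map (x,y) ↦ (ax, y/a). -/
noncomputable def alphaFun (a ψ : ℝ) : ℝ :=
  ∫ t in (0:ℝ)..ψ, 1 / (a ^ 2 * Real.cos t ^ 2 + (a ^ 2)⁻¹ * Real.sin t ^ 2)

/-- The support function of the image of the domain with support function p under
the rotation by σ followed by (x,y) ↦ (ax, y/a). -/
noncomputable def suppTrans (p : ℝ → ℝ) (a σ ψ : ℝ) : ℝ :=
  p (alphaFun a ψ + σ) *
    Real.sqrt ((a ^ 2)⁻¹ * Real.sin ψ ^ 2 + a ^ 2 * Real.cos ψ ^ 2)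

/-!
For a domain with support function `p`, the perimeter of its image is `∫ suppTrans p a σ`.
Substituting `x = α(ψ) + σ` turns this perimeter into `∫ p(x) Q(x) ^ (-3/2) dx`, where `Q` is the
restriction to the unit circle of a positive definite quadratic form of determinant one. In global
coordinates `(u, v) ∈ ℝ²` on these forms the perimeter is a coercive function and so has a minimum.
At the minimum all directional derivatives vanish; the derivatives in the radial and in the angular
direction, pulled back to `ψ`, are multiples of the two second Fourier coefficients of
`suppTrans p a σ`.
-/

open Function

lemma hasDerivAt_intervalIntegral_of_continuous {E : Type*} [NormedAddCommGroup E]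
    [NormedSpace ℝ E] {F F' : ℝ → ℝ → E} (hF : Continuous (uncurry F))
    (hF' : Continuous (uncurry F'))
    (hderiv : ∀ s x, HasDerivAt (F · x) (F' s x) s) (a b s : ℝ) :
    HasDerivAt (fun s => ∫ x in a..b, F s x) (∫ x in a..b, F' s x) s := by
  have hK : IsCompact (Metric.closedBall s 1 ×ˢ uIcc a b) :=
    (isCompact_closedBall s 1).prod isCompact_uIcc
  obtain ⟨M, hM⟩ := hK.exists_bound_of_continuousOn hF'.continuousOn
  have hFs : ∀ r, Continuous (F r) := fun r => hF.comp (Continuous.prodMk_right r)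
  have hFs' : Continuous (F' s) := hF'.comp (Continuous.prodMk_right s)
  exact (intervalIntegral.hasDerivAt_integral_of_dominated_loc_of_deriv_le (bound := fun _ => M)
    (Metric.closedBall_mem_nhds s one_pos)
    (.of_forall fun r => (hFs r).aestronglyMeasurable)
    ((hFs s).intervalIntegrable a b) hFs'.aestronglyMeasurable
    (.of_forall fun x hx r hr => hM (r, x) ⟨hr, uIoc_subset_uIcc hx⟩)
    intervalIntegrable_const (.of_forall fun x _ r _ => hderiv r x)).2

lemma exists_pos_forall_le_of_periodic {p : ℝ → ℝ} {T : ℝ} (hp : Continuous p)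
    (hper : Periodic p T) (hT : T ≠ 0) (hpos : ∀ x, 0 < p x) : ∃ m > 0, ∀ x, m ≤ p x := by
  obtain ⟨_, ⟨y, rfl⟩, hy⟩ := (hper.compact_of_continuous hT hp).exists_isLeast (range_nonempty p)
  exact ⟨p y, hpos y, fun x => hy (mem_range_self x)⟩

/-! ### The angle `α(ψ)` -/

/-- The squared length of the image `(a cos ψ, a⁻¹ sin ψ)` of the unit vector at angle `ψ`. -/
noncomputable def stretchSq (a ψ : ℝ) : ℝ :=
  a ^ 2 * cos ψ ^ 2 + (a ^ 2)⁻¹ * sin ψ ^ 2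

/-- The component of `(a cos ψ, a⁻¹ sin ψ)` along the unit vector at angle `ψ`. -/
noncomputable def stretchRadial (a ψ : ℝ) : ℝ :=
  a * cos ψ ^ 2 + a⁻¹ * sin ψ ^ 2

/-- The component of `(a cos ψ, a⁻¹ sin ψ)` along the unit vector at angle `ψ + π / 2`. -/
noncomputable def stretchTangential (a ψ : ℝ) : ℝ :=
  (a⁻¹ - a) * (sin ψ * cos ψ)

section Angle

variable {a : ℝ}

@[fun_prop]
lemma continuous_stretchSq : Continuous (stretchSq a) := by
  unfold stretchSq; fun_prop

lemma stretchRadial_pos (ha : 0 < a) (ψ : ℝ) : 0 < stretchRadial a ψ := by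
  unfold stretchRadial
  rcases eq_or_ne (cos ψ) 0 with h | h
  · have hsin : sin ψ ^ 2 = 1 := by simpa [h] using sin_sq_add_cos_sq ψ
    simp [h, hsin, ha]
  · positivity

lemma stretchRadial_sq_add_stretchTangential_sq (ha : a ≠ 0) (ψ : ℝ) :
    stretchRadial a ψ ^ 2 + stretchTangential a ψ ^ 2 = stretchSq a ψ := by
  unfold stretchRadial stretchTangential stretchSq
  field_simp
  rw [sin_sq]
  ring

lemma stretchSq_pos (ha : 0 < a) (ψ : ℝ) : 0 < stretchSq a ψ := by
  have := stretchRadial_pos ha ψ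
  rw [← stretchRadial_sq_add_stretchTangential_sq ha.ne']
  positivity

lemma continuous_one_div_stretchSq (ha : 0 < a) : Continuous fun ψ => 1 / stretchSq a ψ :=
  continuous_const.div continuous_stretchSq fun ψ => (stretchSq_pos ha ψ).ne'

lemma one_add_stretchTangential_div_sq (ha : 0 < a) (ψ : ℝ) :
    1 + (stretchTangential a ψ / stretchRadial a ψ) ^ 2 =
      stretchSq a ψ / stretchRadial a ψ ^ 2 := by
  have := stretchRadial_pos ha ψ
  rw [← stretchRadial_sq_add_stretchTangential_sq ha.ne']
  field_simp

lemma hasDerivAt_add_arctan_stretch (ha : 0 < a) (ψ : ℝ) :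
    HasDerivAt (fun φ => φ + arctan (stretchTangential a φ / stretchRadial a φ))
      (1 / stretchSq a ψ) ψ := by
  have hradial : HasDerivAt (stretchRadial a) (2 * stretchTangential a ψ) ψ := by
    refine HasDerivAt.congr_deriv ((((hasDerivAt_cos ψ).pow 2).const_mul a).add
      (((hasDerivAt_sin ψ).pow 2).const_mul a⁻¹)) ?_
    simp only [stretchTangential, Nat.cast_ofNat]
    ring
  have htangential : HasDerivAt (stretchTangential a)
      ((a⁻¹ - a) * (cos ψ ^ 2 - sin ψ ^ 2)) ψ :=
    (((hasDerivAt_sin ψ).mul (hasDerivAt_cos ψ)).const_mul (a⁻¹ - a)).congr_deriv (by ring)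
  have hradial_pos := stretchRadial_pos ha ψ
  have hstretch_pos := stretchSq_pos ha ψ
  refine ((hasDerivAt_id ψ).add (htangential.div hradial hradial_pos.ne').arctan).congr_deriv ?_
  rw [Pi.div_apply, one_add_stretchTangential_div_sq ha]
  field_simp
  unfold stretchSq stretchRadial stretchTangential
  field_simp
  rw [sin_sq]
  ring

-- `α(ψ)` is the polar angle of `(a cos ψ, a⁻¹ sin ψ)`; measuring it from the direction `ψ` keeps it
-- in the range of `arctan`.
lemma alphaFun_eq_add_arctan (ha : 0 < a) (ψ : ℝ) :
    alphaFun a ψ = ψ + arctan (stretchTangential a ψ / stretchRadial a ψ) := by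
  refine (integral_eq_sub_of_hasDerivAt (fun φ _ => hasDerivAt_add_arctan_stretch ha φ)
    ((continuous_one_div_stretchSq ha).intervalIntegrable 0 ψ)).trans ?_
  simp [stretchTangential]

lemma hasDerivAt_alphaFun (ha : 0 < a) (ψ : ℝ) :
    HasDerivAt (alphaFun a) (1 / stretchSq a ψ) ψ := by
  rw [funext (alphaFun_eq_add_arctan ha)]
  exact hasDerivAt_add_arctan_stretch ha ψ

lemma alphaFun_two_pi (ha : 0 < a) : alphaFun a (2 * π) = 2 * π := by
  simp [alphaFun_eq_add_arctan ha, stretchTangential]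

lemma sqrt_one_add_stretchTangential_div_sq (ha : 0 < a) (ψ : ℝ) :
    √(1 + (stretchTangential a ψ / stretchRadial a ψ) ^ 2) =
      √(stretchSq a ψ) / stretchRadial a ψ := by
  rw [one_add_stretchTangential_div_sq ha, sqrt_div (stretchSq_pos ha ψ).le,
    sqrt_sq (stretchRadial_pos ha ψ).le]

lemma cos_alphaFun (ha : 0 < a) (ψ : ℝ) :
    cos (alphaFun a ψ) = a * cos ψ / √(stretchSq a ψ) := by
  have hradial := stretchRadial_pos ha ψ
  have hstretch := sqrt_pos.2 (stretchSq_pos ha ψ)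
  rw [alphaFun_eq_add_arctan ha, cos_add, cos_arctan, sin_arctan,
    sqrt_one_add_stretchTangential_div_sq ha]
  field_simp
  unfold stretchRadial stretchTangential
  linear_combination cos ψ * a * sin_sq_add_cos_sq ψ

lemma sin_alphaFun (ha : 0 < a) (ψ : ℝ) :
    sin (alphaFun a ψ) = a⁻¹ * sin ψ / √(stretchSq a ψ) := by
  have hradial := stretchRadial_pos ha ψ
  have hstretch := sqrt_pos.2 (stretchSq_pos ha ψ)
  rw [alphaFun_eq_add_arctan ha, sin_add, cos_arctan, sin_arctan,
    sqrt_one_add_stretchTangential_div_sq ha]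
  field_simp
  unfold stretchRadial stretchTangential
  field_simp
  linear_combination sin ψ * sin_sq_add_cos_sq ψ

lemma suppTrans_eq_mul_sqrt_stretchSq (p : ℝ → ℝ) (a σ ψ : ℝ) :
    suppTrans p a σ ψ = p (alphaFun a ψ + σ) * √(stretchSq a ψ) := by
  rw [suppTrans, stretchSq, add_comm (a ^ 2 * _)]

lemma continuous_suppTrans {p : ℝ → ℝ} (hp : Continuous p) (ha : 0 < a) (σ : ℝ) :
    Continuous (suppTrans p a σ) := by
  have hα : Continuous (alphaFun a) :=
    continuous_iff_continuousAt.2 fun ψ => (hasDerivAt_alphaFun ha ψ).continuousAt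
  rw [funext (suppTrans_eq_mul_sqrt_stretchSq p a σ)]
  fun_prop

lemma integral_comp_alphaFun_add_div {G : ℝ → ℝ} (hG : Continuous G)
    (hper : Periodic G (2 * π)) (ha : 0 < a) (σ : ℝ) :
    ∫ ψ in (0:ℝ)..(2 * π), G (alphaFun a ψ + σ) / stretchSq a ψ =
      ∫ x in (0:ℝ)..(2 * π), G x := by
  calc ∫ ψ in (0:ℝ)..(2 * π), G (alphaFun a ψ + σ) / stretchSq a ψ
      = ∫ ψ in (0:ℝ)..(2 * π), ((fun x => G (x + σ)) ∘ alphaFun a) ψ * (1 / stretchSq a ψ) := by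
        simp only [comp_apply, mul_one_div]
    _ = ∫ x in alphaFun a 0..alphaFun a (2 * π), G (x + σ) :=
        integral_comp_mul_deriv (fun ψ _ => hasDerivAt_alphaFun ha ψ)
          (continuous_one_div_stretchSq ha).continuousOn (by fun_prop)
    _ = ∫ x in (0:ℝ)..(2 * π), G (x + σ) := by
        rw [alphaFun_two_pi ha, alphaFun, integral_same]
    _ = ∫ x in σ..(σ + 2 * π), G x := by
        rw [integral_comp_add_right, zero_add, add_comm σ]
    _ = ∫ x in (0:ℝ)..(2 * π), G x := by
        rw [hper.intervalIntegral_add_eq σ 0, zero_add]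

end Angle

/-! ### Double-angle formulas in hyperbolic coordinates -/

section DoubleAngle

variable (τ ψ : ℝ)

lemma exp_half_sq : exp (τ / 2) ^ 2 = exp τ := by
  rw [← exp_nat_mul, Nat.cast_two, mul_div_cancel₀ τ two_ne_zero]

lemma stretchSq_exp_half : stretchSq (exp (τ / 2)) ψ = cosh τ + sinh τ * cos (2 * ψ) := by
  rw [stretchSq, exp_half_sq, ← exp_neg, ← cosh_add_sinh, ← cosh_sub_sinh, cos_two_mul']
  linear_combination cosh τ * sin_sq_add_cos_sq ψ

lemma stretchSq_exp_half_le : stretchSq (exp (τ / 2)) ψ ≤ 2 * cosh τ := by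
  have hsinh : |sinh τ| ≤ cosh τ :=
    abs_le_of_sq_le_sq (by rw [cosh_sq]; linarith) (cosh_pos τ).le
  calc stretchSq (exp (τ / 2)) ψ
      = cosh τ + sinh τ * cos (2 * ψ) := stretchSq_exp_half τ ψ
    _ ≤ cosh τ + |sinh τ| * |cos (2 * ψ)| := by
        rw [← abs_mul]
        gcongr
        exact le_abs_self _
    _ ≤ cosh τ + cosh τ * 1 := by
        gcongr
        exact abs_cos_le_one _
    _ = 2 * cosh τ := by ring

lemma stretchSq_exp_half_div_sqrt_le :
    stretchSq (exp (τ / 2)) ψ / √(2 * cosh τ) ≤ √(stretchSq (exp (τ / 2)) ψ) := by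
  have hR := stretchSq_pos (exp_pos (τ / 2)) ψ
  calc stretchSq (exp (τ / 2)) ψ / √(2 * cosh τ)
      ≤ stretchSq (exp (τ / 2)) ψ / √(stretchSq (exp (τ / 2)) ψ) := by
        gcongr
        exact stretchSq_exp_half_le τ ψ
    _ = √(stretchSq (exp (τ / 2)) ψ) := div_sqrt

lemma integral_stretchSq_exp_half :
    ∫ ψ in (0:ℝ)..(2 * π), stretchSq (exp (τ / 2)) ψ = 2 * π * cosh τ := by
  have hcos : ∫ ψ in (0:ℝ)..(2 * π), cos (2 * ψ) = 0 := by
    simp [integral_comp_mul_left, sin_two_mul]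
  simp only [stretchSq_exp_half]
  rw [intervalIntegral.integral_add (Continuous.intervalIntegrable (by fun_prop) _ _)
    (Continuous.intervalIntegrable (by fun_prop) _ _), intervalIntegral.integral_const_mul, hcos,
    mul_zero, add_zero, intervalIntegral.integral_const, sub_zero, smul_eq_mul]

lemma cos_two_mul_alphaFun_exp_half :
    cos (2 * alphaFun (exp (τ / 2)) ψ) =
      (sinh τ + cosh τ * cos (2 * ψ)) / stretchSq (exp (τ / 2)) ψ := by
  have hpos := exp_pos (τ / 2)
  rw [cos_two_mul' (alphaFun _ _), cos_alphaFun hpos, sin_alphaFun hpos, div_pow, div_pow,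
    sq_sqrt (stretchSq_pos hpos ψ).le, ← sub_div, mul_pow, mul_pow, inv_pow, exp_half_sq, ← exp_neg,
    ← cosh_add_sinh, ← cosh_sub_sinh, cos_two_mul']
  congr 1
  linear_combination sinh τ * sin_sq_add_cos_sq ψ

lemma sin_two_mul_alphaFun {a : ℝ} (ha : 0 < a) :
    sin (2 * alphaFun a ψ) = sin (2 * ψ) / stretchSq a ψ := by
  have := stretchSq_pos ha ψ
  rw [sin_two_mul, sin_two_mul, cos_alphaFun ha, sin_alphaFun ha]
  field_simp
  rw [sq_sqrt this.le]
  ring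

end DoubleAngle

/-! ### Quadratic forms of determinant one -/

/-- The restriction to the unit circle, as a function of the angle `x`, of a positive definite
quadratic form of determinant one on the plane. Every such form arises for a unique `(u, v)`. -/
noncomputable def unimodularForm (u v x : ℝ) : ℝ :=
  √(1 + u ^ 2 + v ^ 2) - (u * cos (2 * x) + v * sin (2 * x))

/-- The derivative of `unimodularForm` at `(u, v)` in the direction `(c, d)`. -/
noncomputable def unimodularFormDeriv (u v c d x : ℝ) : ℝ :=
  (u * c + v * d) / √(1 + u ^ 2 + v ^ 2) - (c * cos (2 * x) + d * sin (2 * x))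

lemma unimodularForm_pos (u v x : ℝ) : 0 < unimodularForm u v x := by
  refine sub_pos.2 (lt_sqrt_of_sq_lt ?_)
  nlinarith [sq_nonneg (u * sin (2 * x) - v * cos (2 * x)), sin_sq_add_cos_sq (2 * x)]

section Continuity

variable {X : Type*} [TopologicalSpace X] {f g h : X → ℝ}

@[fun_prop]
lemma continuous_unimodularForm (hf : Continuous f) (hg : Continuous g) (hh : Continuous h) :
    Continuous fun z => unimodularForm (f z) (g z) (h z) := by
  unfold unimodularForm
  fun_prop

@[fun_prop]
lemma continuous_unimodularForm_rpow (hf : Continuous f) (hg : Continuous g)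
    (hh : Continuous h) (r : ℝ) : Continuous fun z => unimodularForm (f z) (g z) (h z) ^ r :=
  (continuous_unimodularForm hf hg hh).rpow_const fun _ => Or.inl (unimodularForm_pos _ _ _).ne'

@[fun_prop]
lemma continuous_unimodularFormDeriv (hf : Continuous f) (hg : Continuous g)
    (hh : Continuous h) (c d : ℝ) :
    Continuous fun z => unimodularFormDeriv (f z) (g z) c d (h z) := by
  have : ∀ z, √(1 + f z ^ 2 + g z ^ 2) ≠ 0 := fun z => (sqrt_pos.2 (by positivity)).ne'
  unfold unimodularFormDeriv
  fun_prop (disch := assumption)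

end Continuity

lemma periodic_unimodularForm (u v : ℝ) : Periodic (unimodularForm u v) (2 * π) := fun x => by
  simp only [unimodularForm, cos_two_mul, sin_two_mul, cos_add_two_pi, sin_add_two_pi]

lemma periodic_unimodularFormDeriv (u v c d : ℝ) :
    Periodic (unimodularFormDeriv u v c d) (2 * π) := fun x => by
  simp only [unimodularFormDeriv, cos_two_mul, sin_two_mul, cos_add_two_pi, sin_add_two_pi]

lemma hasDerivAt_unimodularForm (u v c d x s : ℝ) :
    HasDerivAt (fun s => unimodularForm (u + s * c) (v + s * d) x)
      (unimodularFormDeriv (u + s * c) (v + s * d) c d x) s := by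
  have hu : HasDerivAt (fun s => u + s * c) c s := (hasDerivAt_mul_const c).const_add u
  have hv : HasDerivAt (fun s => v + s * d) d s := (hasDerivAt_mul_const d).const_add v
  have hne : 1 + (u + s * c) ^ 2 + (v + s * d) ^ 2 ≠ 0 := by positivity
  have hsq : HasDerivAt (fun s => 1 + (u + s * c) ^ 2 + (v + s * d) ^ 2)
      (2 * ((u + s * c) * c + (v + s * d) * d)) s := by
    refine HasDerivAt.congr_deriv (((hu.pow 2).const_add 1).add (hv.pow 2)) ?_
    simp only [Nat.cast_ofNat]
    ring
  refine HasDerivAt.congr_deriv ((hsq.sqrt hne).sub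
    ((hu.mul_const (cos (2 * x))).add (hv.mul_const (sin (2 * x))))) ?_
  rw [unimodularFormDeriv, mul_div_mul_left _ _ two_ne_zero]

lemma hasDerivAt_integral_mul_unimodularForm_rpow {p : ℝ → ℝ} (hp : Continuous p)
    (r u v c d A B : ℝ) :
    HasDerivAt (fun s => ∫ x in A..B, p x * unimodularForm (u + s * c) (v + s * d) x ^ r)
      (r * ∫ x in A..B, p x * (unimodularForm u v x ^ (r - 1) * unimodularFormDeriv u v c d x))
      0 := by
  have h := hasDerivAt_intervalIntegral_of_continuous
    (F := fun s x => p x * unimodularForm (u + s * c) (v + s * d) x ^ r)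
    (F' := fun s x => r * (p x * (unimodularForm (u + s * c) (v + s * d) x ^ (r - 1) *
      unimodularFormDeriv (u + s * c) (v + s * d) c d x)))
    (by simp only [uncurry_def]; fun_prop) (by simp only [uncurry_def]; fun_prop)
    (fun s x => (((hasDerivAt_unimodularForm u v c d x s).rpow_const
      (Or.inl (unimodularForm_pos _ _ _).ne')).const_mul (p x)).congr_deriv (by ring)) A B 0
  simpa only [zero_mul, add_zero, intervalIntegral.integral_const_mul] using h

/-! ### Polar coordinates on the forms -/

lemma exists_sinh_mul_cos_sin (u v : ℝ) :
    ∃ τ, ∃ σ ∈ Icc 0 (π / 2), u = sinh τ * cos (2 * σ) ∧ v = sinh τ * sin (2 * σ) := by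
  -- `sinh τ` takes both signs, so a half turn of directions `2σ` is enough.
  wlog hv : 0 ≤ v generalizing u v
  · obtain ⟨τ, σ, hσ, hu', hv'⟩ := this (-u) (-v) (by linarith)
    exact ⟨-τ, σ, hσ, by rw [sinh_neg]; linarith, by rw [sinh_neg]; linarith⟩
  let z : ℂ := ⟨u, v⟩
  have harg : 0 ≤ z.arg := Complex.arg_nonneg_iff.2 hv
  refine ⟨arsinh ‖z‖, z.arg / 2, ⟨by linarith, by linarith [z.arg_le_pi]⟩, ?_, ?_⟩
  · rw [sinh_arsinh, mul_div_cancel₀ _ two_ne_zero, Complex.norm_mul_cos_arg]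
  · rw [sinh_arsinh, mul_div_cancel₀ _ two_ne_zero, Complex.norm_mul_sin_arg]

section Polar

variable (τ σ x : ℝ)

lemma sqrt_one_add_sinh_polar_sq :
    √(1 + (sinh τ * cos (2 * σ)) ^ 2 + (sinh τ * sin (2 * σ)) ^ 2) = cosh τ := by
  rw [← sqrt_sq (cosh_pos τ).le, cosh_sq]
  congr 1
  linear_combination sinh τ ^ 2 * cos_sq_add_sin_sq (2 * σ)

lemma unimodularForm_polar :
    unimodularForm (sinh τ * cos (2 * σ)) (sinh τ * sin (2 * σ)) (x + σ) =
      cosh τ - sinh τ * cos (2 * x) := by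
  rw [unimodularForm, sqrt_one_add_sinh_polar_sq, mul_add, cos_add, sin_add]
  linear_combination -(sinh τ * cos (2 * x)) * cos_sq_add_sin_sq (2 * σ)

lemma unimodularFormDeriv_polar_radial :
    unimodularFormDeriv (sinh τ * cos (2 * σ)) (sinh τ * sin (2 * σ))
        (cosh τ * cos (2 * σ)) (cosh τ * sin (2 * σ)) (x + σ) =
      sinh τ - cosh τ * cos (2 * x) := by
  have := cosh_pos τ
  rw [unimodularFormDeriv, sqrt_one_add_sinh_polar_sq, mul_add, cos_add, sin_add]
  field_simp
  linear_combination (sinh τ - cosh τ * cos (2 * x)) * cos_sq_add_sin_sq (2 * σ)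

lemma unimodularFormDeriv_polar_angular :
    unimodularFormDeriv (sinh τ * cos (2 * σ)) (sinh τ * sin (2 * σ))
        (-sin (2 * σ)) (cos (2 * σ)) (x + σ) = -sin (2 * x) := by
  rw [unimodularFormDeriv, mul_add, cos_add, sin_add,
    show sinh τ * cos (2 * σ) * -sin (2 * σ) + sinh τ * sin (2 * σ) * cos (2 * σ) = 0 by ring]
  linear_combination -sin (2 * x) * cos_sq_add_sin_sq (2 * σ)

variable (ψ : ℝ)

lemma unimodularForm_polar_alphaFun :
    unimodularForm (sinh τ * cos (2 * σ)) (sinh τ * sin (2 * σ))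
        (alphaFun (exp (τ / 2)) ψ + σ) = 1 / stretchSq (exp (τ / 2)) ψ := by
  have := stretchSq_pos (exp_pos (τ / 2)) ψ
  rw [unimodularForm_polar, cos_two_mul_alphaFun_exp_half]
  field_simp
  rw [stretchSq_exp_half]
  linear_combination cosh_sq_sub_sinh_sq τ

lemma unimodularFormDeriv_polar_radial_alphaFun :
    unimodularFormDeriv (sinh τ * cos (2 * σ)) (sinh τ * sin (2 * σ))
        (cosh τ * cos (2 * σ)) (cosh τ * sin (2 * σ)) (alphaFun (exp (τ / 2)) ψ + σ) =
      -cos (2 * ψ) / stretchSq (exp (τ / 2)) ψ := by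
  have := stretchSq_pos (exp_pos (τ / 2)) ψ
  rw [unimodularFormDeriv_polar_radial, cos_two_mul_alphaFun_exp_half]
  field_simp
  rw [stretchSq_exp_half]
  linear_combination -cos (2 * ψ) * cosh_sq_sub_sinh_sq τ

lemma unimodularFormDeriv_polar_angular_alphaFun :
    unimodularFormDeriv (sinh τ * cos (2 * σ)) (sinh τ * sin (2 * σ))
        (-sin (2 * σ)) (cos (2 * σ)) (alphaFun (exp (τ / 2)) ψ + σ) =
      -sin (2 * ψ) / stretchSq (exp (τ / 2)) ψ := by
  rw [unimodularFormDeriv_polar_angular, sin_two_mul_alphaFun ψ (exp_pos _), neg_div]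

end Polar

lemma inv_rpow_neg_five_halves {R : ℝ} (hR : 0 < R) : R⁻¹ ^ (-(5 / 2) : ℝ) = R ^ 2 * √R := by
  rw [← rpow_neg_eq_inv_rpow, neg_neg, sqrt_eq_rpow, ← rpow_natCast, ← rpow_add hR]
  norm_num

section Perimeter

variable {p : ℝ → ℝ}

lemma integral_suppTrans_mul (hp : Continuous p) (hper : Periodic p (2 * π)) {τ σ : ℝ}
    {e k : ℝ → ℝ} (hk : Continuous k) (hkper : Periodic k (2 * π))
    (hke : ∀ ψ, k (alphaFun (exp (τ / 2)) ψ + σ) = e ψ / stretchSq (exp (τ / 2)) ψ) :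
    ∫ ψ in (0:ℝ)..(2 * π), suppTrans p (exp (τ / 2)) σ ψ * e ψ =
      ∫ x in (0:ℝ)..(2 * π), p x *
        (unimodularForm (sinh τ * cos (2 * σ)) (sinh τ * sin (2 * σ)) x ^ (-(5 / 2) : ℝ) *
          k x) := by
  let G x := p x *
    (unimodularForm (sinh τ * cos (2 * σ)) (sinh τ * sin (2 * σ)) x ^ (-(5 / 2) : ℝ) * k x)
  have hG : Continuous G := by fun_prop
  have hGper : Periodic G (2 * π) := fun x => by
    simp only [G, hper x, hkper x, periodic_unimodularForm _ _ x]
  have hpos := exp_pos (τ / 2)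
  rw [← integral_comp_alphaFun_add_div hG hGper hpos σ]
  refine integral_congr fun ψ _ => ?_
  have hR := stretchSq_pos hpos ψ
  simp only [G, unimodularForm_polar_alphaFun, hke, one_div, inv_rpow_neg_five_halves hR,
    suppTrans_eq_mul_sqrt_stretchSq]
  field_simp

/-- The perimeter of the image of the domain with support function `p` under the unimodular linear
map `φ_{a,σ}`, in the coordinates `(u, v)` of `unimodularForm`; `imagePerimeter_polar` relates them
to `a = exp (τ / 2)` and `σ`. -/
noncomputable def imagePerimeter (p : ℝ → ℝ) (u v : ℝ) : ℝ :=
  ∫ x in (0:ℝ)..(2 * π), p x * unimodularForm u v x ^ (-(3 / 2) : ℝ)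

lemma continuous_imagePerimeter (hp : Continuous p) : Continuous (uncurry (imagePerimeter p)) := by
  unfold imagePerimeter
  exact continuous_parametric_intervalIntegral_of_continuous' (by fun_prop) _ _

lemma imagePerimeter_polar (hp : Continuous p) (hper : Periodic p (2 * π)) (τ σ : ℝ) :
    imagePerimeter p (sinh τ * cos (2 * σ)) (sinh τ * sin (2 * σ)) =
      ∫ ψ in (0:ℝ)..(2 * π), suppTrans p (exp (τ / 2)) σ ψ := by
  have h := integral_suppTrans_mul hp hper (e := fun _ => 1) (by fun_prop)
    (periodic_unimodularForm _ _) (unimodularForm_polar_alphaFun τ σ)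
  simp only [mul_one] at h
  rw [h, imagePerimeter]
  refine integral_congr fun x _ => ?_
  simp only [← rpow_add_one (unimodularForm_pos _ _ x).ne']
  norm_num

lemma sqrt_mul_le_imagePerimeter {m : ℝ} (hp : Continuous p) (hper : Periodic p (2 * π))
    (hm : 0 ≤ m) (hmp : ∀ x, m ≤ p x) (u v : ℝ) :
    m * π * √(2 * √(1 + u ^ 2 + v ^ 2)) ≤ imagePerimeter p u v := by
  obtain ⟨τ, σ, -, rfl, rfl⟩ := exists_sinh_mul_cos_sin u v
  rw [sqrt_one_add_sinh_polar_sq, imagePerimeter_polar hp hper]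
  have hbound : ∀ ψ, m * (stretchSq (exp (τ / 2)) ψ / √(2 * cosh τ)) ≤
      suppTrans p (exp (τ / 2)) σ ψ := fun ψ => by
    rw [suppTrans_eq_mul_sqrt_stretchSq]
    exact mul_le_mul (hmp _) (stretchSq_exp_half_div_sqrt_le τ ψ)
      (div_nonneg (stretchSq_pos (exp_pos _) ψ).le (sqrt_nonneg _)) (hm.trans (hmp _))
  calc m * π * √(2 * cosh τ)
      = m * (2 * π * cosh τ / √(2 * cosh τ)) := by
        rw [mul_assoc, mul_right_comm 2, mul_comm (2 * cosh τ) π, mul_div_assoc, div_sqrt]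
    _ = ∫ ψ in (0:ℝ)..(2 * π), m * (stretchSq (exp (τ / 2)) ψ / √(2 * cosh τ)) := by
        rw [intervalIntegral.integral_const_mul, intervalIntegral.integral_div,
          integral_stretchSq_exp_half]
    _ ≤ ∫ ψ in (0:ℝ)..(2 * π), suppTrans p (exp (τ / 2)) σ ψ :=
        integral_mono two_pi_pos.le (Continuous.intervalIntegrable (by fun_prop) _ _)
          ((continuous_suppTrans hp (exp_pos _) σ).intervalIntegrable _ _) hbound

lemma tendsto_sqrt_one_add_sq_add_sq_cocompact :
    Filter.Tendsto (fun z : ℝ × ℝ => √(1 + z.1 ^ 2 + z.2 ^ 2)) (Filter.cocompact (ℝ × ℝ))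
      Filter.atTop := by
  refine Filter.tendsto_atTop_mono (fun z => max_le ?_ ?_) tendsto_norm_cocompact_atTop
  · exact abs_le_sqrt (by nlinarith)
  · exact abs_le_sqrt (by nlinarith)

lemma exists_forall_imagePerimeter_le (hp : Continuous p) (hper : Periodic p (2 * π))
    (hpos : ∀ x, 0 < p x) :
    ∃ u v, ∀ u' v', imagePerimeter p u v ≤ imagePerimeter p u' v' := by
  obtain ⟨m, hm, hmp⟩ := exists_pos_forall_le_of_periodic hp hper two_pi_pos.ne' hpos
  have hbound : Filter.Tendsto (fun z : ℝ × ℝ => m * π * √(2 * √(1 + z.1 ^ 2 + z.2 ^ 2)))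
      (Filter.cocompact (ℝ × ℝ)) Filter.atTop :=
    (tendsto_sqrt_atTop.comp (tendsto_sqrt_one_add_sq_add_sq_cocompact.const_mul_atTop
      two_pos)).const_mul_atTop (mul_pos hm pi_pos)
  obtain ⟨⟨u, v⟩, hmin⟩ := (continuous_imagePerimeter hp).exists_forall_le
    (Filter.tendsto_atTop_mono
      (fun z => sqrt_mul_le_imagePerimeter hp hper hm.le hmp z.1 z.2) hbound)
  exact ⟨u, v, fun u' v' => hmin (u', v')⟩

lemma integral_mul_unimodularFormDeriv_eq_zero (hp : Continuous p) {u v : ℝ}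
    (hmin : ∀ u' v', imagePerimeter p u v ≤ imagePerimeter p u' v') (c d : ℝ) :
    ∫ x in (0:ℝ)..(2 * π), p x *
      (unimodularForm u v x ^ (-(5 / 2) : ℝ) * unimodularFormDeriv u v c d x) = 0 := by
  have hderiv := hasDerivAt_integral_mul_unimodularForm_rpow hp (-(3 / 2)) u v c d 0 (2 * π)
  have hloc : IsLocalMin (fun s => imagePerimeter p (u + s * c) (v + s * d)) 0 :=
    .of_forall fun s => by simpa only [zero_mul, add_zero] using hmin _ _
  have hzero := (mul_eq_zero.1 (hloc.hasDerivAt_eq_zero hderiv)).resolve_left (by norm_num)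
  rwa [show (-(3 / 2) - 1 : ℝ) = -(5 / 2) by norm_num] at hzero

end Perimeter

theorem exists_affine_normalization_vanishing_second_Fourier_terms_general
    {p : ℝ → ℝ} (hp : Continuous p) (hper : Periodic p (2 * π)) (hpos : ∀ α, 0 < p α) :
    ∃ a σ : ℝ, 0 < a ∧ σ ∈ Icc 0 (π / 2) ∧
      (∫ ψ in (0:ℝ)..(2 * π), suppTrans p a σ ψ * cos (2 * ψ)) = 0 ∧
      (∫ ψ in (0:ℝ)..(2 * π), suppTrans p a σ ψ * sin (2 * ψ)) = 0 := by
  obtain ⟨u, v, hmin⟩ := exists_forall_imagePerimeter_le hp hper hpos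
  obtain ⟨τ, σ, hσ, rfl, rfl⟩ := exists_sinh_mul_cos_sin u v
  have hcos := integral_suppTrans_mul hp hper (by fun_prop)
    (periodic_unimodularFormDeriv _ _ _ _) (unimodularFormDeriv_polar_radial_alphaFun τ σ)
  have hsin := integral_suppTrans_mul hp hper (by fun_prop)
    (periodic_unimodularFormDeriv _ _ _ _) (unimodularFormDeriv_polar_angular_alphaFun τ σ)
  rw [integral_mul_unimodularFormDeriv_eq_zero hp hmin] at hcos hsin
  simp only [mul_neg, intervalIntegral.integral_neg, neg_eq_zero] at hcos hsin
  exact ⟨exp (τ / 2), σ, exp_pos _, hσ, hcos, hsin⟩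

/-- There is an affine normalization killing the second Fourier coefficients of the
support function. -/
theorem exists_affine_normalization_vanishing_second_Fourier_terms
    (p : ℝ → ℝ) (hp : ContDiff ℝ (⊤ : ℕ∞) p) (hper : ∀ α, p (α + 2 * π) = p α)
    (hpos : ∀ α, 0 < p α)
    (hcurv : ∀ α, 0 < deriv (deriv p) α + p α) :
    ∃ a σ : ℝ, 0 < a ∧ σ ∈ Icc 0 (π / 2) ∧
      (∫ ψ in (0:ℝ)..(2 * π), suppTrans p a σ ψ * Real.cos (2 * ψ)) = 0 ∧
      (∫ ψ in (0:ℝ)..(2 * π), suppTrans p a σ ψ * Real.sin (2 * ψ)) = 0 :=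
  exists_affine_normalization_vanishing_second_Fourier_terms_general hp.continuous hper hpos
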